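/- arXiv:1403.1591 — 4 statements merged into one kernel-verified Lean document; each statement's English description precedes it below -/
import Mathlib

section
/- Let I be a finite set with N elements, let 𝒜 be a downward-closed family of subsets of I, let m₀ be an integer with 0 ≤ m₀ ≤ N, let ε₀ > 0, and set ρ₀ = m₀/N + ε₀, assuming ρ₀ ≤ 1. Then P_{Unif(m₀)}(𝒜) ≥ P_{Ber(ρ₀)}(𝒜) − exp(−2 N ε₀²), i.e., (#{S ∈ 𝒜 : |S| = m₀}) / C(N, m₀) ≥ Σ_{S ∈ 𝒜} ρ₀^{|S|} (1 − ρ₀)^{N − |S|} − exp(−2 N ε₀²). -/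
open Finset in
lemma slice_ratio_anti {ι : Type*} [Fintype ι] [DecidableEq ι]
    (𝒜 : Finset (Finset ι))
    (hdc : ∀ S ∈ 𝒜, ∀ S' ⊆ S, S' ∈ 𝒜) (m k : ℕ) (hmk : m ≤ k) :
    k ≤ Fintype.card ι →
    ((𝒜.filter (fun S => S.card = k)).card : ℝ) / ((Fintype.card ι).choose k : ℝ)
      ≤ ((𝒜.filter (fun S => S.card = m)).card : ℝ) / ((Fintype.card ι).choose m : ℝ) := by
  induction k, hmk using Nat.le_induction with
  | base => intro _; exact le_rfl
  | succ k hk ih =>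
    intro hkN
    refine le_trans ?_ (ih (by omega))
    have h := Finset.local_lubell_yamamoto_meshalkin_inequality_div (𝕜 := ℝ) (r := k + 1)
      (𝒜 := 𝒜.filter (fun S => S.card = k + 1)) (by omega)
      (by intro S hS; simp at hS; exact hS.2)
    refine h.trans ?_
    rw [Nat.add_sub_cancel]
    gcongr
    intro S hS
    rw [Finset.mem_shadow_iff] at hS
    obtain ⟨T, hT, a, ha, rfl⟩ := hS
    rw [Finset.mem_filter] at hT ⊢
    refine ⟨hdc T hT.1 _ (Finset.erase_subset _ _), ?_⟩
    rw [Finset.card_erase_of_mem ha, hT.2]; rfl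

open MeasureTheory ProbabilityTheory in
lemma bern_mgf (ρ t : ℝ) (h0 : 0 ≤ ρ) (h1 : ρ ≤ 1) :
    ρ * Real.exp (-t) + (1 - ρ) ≤ Real.exp (-t * ρ + t ^ 2 / 8) := by
  let μ : Measure ℝ := ENNReal.ofReal ρ • Measure.dirac 1 + ENNReal.ofReal (1 - ρ) • Measure.dirac 0
  have hμ : IsProbabilityMeasure μ := ⟨by
    simp only [μ, Measure.add_apply, Measure.smul_apply, measure_univ, smul_eq_mul, mul_one]
    rw [← ENNReal.ofReal_add h0 (by linarith)]; simp⟩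
  have hint : ∀ f : ℝ → ℝ, ∫ x, f x ∂μ = ρ * f 1 + (1 - ρ) * f 0 := by
    intro f
    have hi : ∀ (c a : ℝ), Integrable f (ENNReal.ofReal c • Measure.dirac a) := fun c a =>
      (integrable_dirac (by simp)).smul_measure ENNReal.ofReal_ne_top
    rw [integral_add_measure (hi _ _) (hi _ _), integral_smul_measure, integral_smul_measure,
      integral_dirac, integral_dirac, ENNReal.toReal_ofReal h0,
      ENNReal.toReal_ofReal (by linarith)]
    simp
  have h := (hasSubgaussianMGF_of_mem_Icc (μ := μ) (X := fun x => x) (a := 0) (b := 1)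
    aemeasurable_id (by
      simp only [μ]
      rw [ae_add_measure_iff]
      constructor
      · apply Measure.ae_smul_measure
        rw [ae_dirac_iff (by measurability)]; simp
      · apply Measure.ae_smul_measure
        rw [ae_dirac_iff (by measurability)]; simp)).mgf_le (-t)
  rw [mgf, hint, hint] at h
  have e1 : Real.exp (-t * ρ + t ^ 2 / 8) = Real.exp (-t*ρ) * Real.exp (t^2/8) := Real.exp_add _ _
  have e2 : Real.exp (-t * (1 - ρ)) = Real.exp (-t) * Real.exp (t*ρ) := by
    rw [← Real.exp_add]; ring_nf
  have e3 : Real.exp (-t * ρ) * Real.exp (t*ρ) = 1 := by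
    rw [← Real.exp_add]; ring_nf; simp
  have h' : ρ * Real.exp (-t * (1 - ρ)) + (1 - ρ) * Real.exp (t * ρ) ≤ Real.exp (t^2/8) := by
    have e4 : (((‖(1:ℝ) - 0‖₊ / 2) ^ 2 : NNReal) : ℝ) * (-t) ^ 2 / 2 = t ^ 2 / 8 := by
      norm_num; ring
    rw [e4] at h
    convert h using 3
    · ring_nf
    · ring_nf
  rw [e1]
  calc _ = Real.exp (-t * ρ) * (ρ * Real.exp (-t * (1 - ρ)) + (1 - ρ) * Real.exp (t * ρ)) := by
        rw [e2]; linear_combination (-(ρ * Real.exp (-t)) - (1 - ρ)) * e3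
    _ ≤ _ := by gcongr

/-- For a downward-closed family `𝒜` of subsets of an `N`-element set,
`m₀ ≤ N`, `ε₀ > 0`, and `ρ₀ = m₀/N + ε₀ ≤ 1`, one has
`P_{Unif(m₀)}(𝒜) ≥ P_{Ber(ρ₀)}(𝒜) − exp(−2 N ε₀²)`. -/
theorem unif_ge_bernoulli_sub_exp {ι : Type*} [Fintype ι] [DecidableEq ι]
    (𝒜 : Finset (Finset ι))
    (hdc : ∀ S ∈ 𝒜, ∀ S' ⊆ S, S' ∈ 𝒜)
    (m₀ : ℕ) (hm₀ : m₀ ≤ Fintype.card ι)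
    (ε₀ ρ₀ : ℝ) (hε₀ : 0 < ε₀)
    (hρ₀ : ρ₀ = (m₀ : ℝ) / (Fintype.card ι : ℝ) + ε₀) (hρ₀1 : ρ₀ ≤ 1) :
    (∑ S ∈ 𝒜, ρ₀ ^ S.card * (1 - ρ₀) ^ (Fintype.card ι - S.card))
        - Real.exp (-2 * (Fintype.card ι : ℝ) * ε₀ ^ 2)
      ≤ ((𝒜.filter (fun S => S.card = m₀)).card : ℝ) / ((Fintype.card ι).choose m₀ : ℝ) := by
  have hρ : 0 ≤ ρ₀ := by rw [hρ₀]; positivity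
  have hσ : 0 ≤ 1 - ρ₀ := by linarith
  set N := Fintype.card ι with hN
  have hmN : (m₀ : ℝ) = N * (ρ₀ - ε₀) := by
    rcases Nat.eq_zero_or_pos N with h | h
    · have : m₀ = 0 := by omega
      simp [h, this]
    · have : (N : ℝ) ≠ 0 := by positivity
      rw [hρ₀]; field_simp; ring
  rw [← Finset.sum_filter_add_sum_filter_not 𝒜 (fun S => S.card < m₀)]
  have hlow : ∑ S ∈ 𝒜.filter (fun S => S.card < m₀), ρ₀ ^ S.card * (1 - ρ₀) ^ (N - S.card)
      ≤ Real.exp (-2 * (N : ℝ) * ε₀ ^ 2) := by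
    calc _ ≤ ∑ S ∈ 𝒜.filter (fun S => S.card < m₀), Real.exp (4 * ε₀ * m₀) *
            ((ρ₀ * Real.exp (-(4 * ε₀))) ^ S.card * (1 - ρ₀) ^ (N - S.card)) := by
          refine Finset.sum_le_sum fun S hS => ?_
          have hc : (S.card : ℝ) ≤ m₀ := by
            exact_mod_cast (Finset.mem_filter.1 hS).2.le
          have : (1:ℝ) ≤ Real.exp (4 * ε₀ * m₀) * Real.exp (-(4 * ε₀)) ^ S.card := by
            rw [← Real.exp_nat_mul, ← Real.exp_add]
            apply Real.one_le_exp
            nlinarith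
          have hw : 0 ≤ ρ₀ ^ S.card * (1 - ρ₀) ^ (N - S.card) := by positivity
          rw [mul_pow]
          nlinarith [mul_le_mul_of_nonneg_left this hw]
      _ ≤ ∑ S : Finset ι, Real.exp (4 * ε₀ * m₀) *
            ((ρ₀ * Real.exp (-(4 * ε₀))) ^ S.card * (1 - ρ₀) ^ (N - S.card)) := by
          refine Finset.sum_le_sum_of_subset_of_nonneg (Finset.subset_univ _) fun S _ _ => ?_
          positivity
      _ = Real.exp (4 * ε₀ * m₀) * (ρ₀ * Real.exp (-(4 * ε₀)) + (1 - ρ₀)) ^ N := by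
          rw [← Finset.mul_sum, hN, Fintype.sum_pow_mul_eq_add_pow]
      _ ≤ Real.exp (4 * ε₀ * m₀) * (Real.exp (-(4 * ε₀) * ρ₀ + (4 * ε₀) ^ 2 / 8)) ^ N := by
          gcongr
          exact bern_mgf _ _ hρ hρ₀1
      _ = _ := by
          rw [← Real.exp_nat_mul, ← Real.exp_add, hmN]
          ring_nf
  have hhigh : ∑ S ∈ 𝒜.filter (fun S => ¬ S.card < m₀), ρ₀ ^ S.card * (1 - ρ₀) ^ (N - S.card)
      ≤ ((𝒜.filter (fun S => S.card = m₀)).card : ℝ) / (N.choose m₀ : ℝ) := by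
    set a : ℝ := ((𝒜.filter (fun S => S.card = m₀)).card : ℝ) / (N.choose m₀ : ℝ) with ha
    have ha0 : 0 ≤ a := div_nonneg (Nat.cast_nonneg _) (Nat.cast_nonneg _)
    rw [← Finset.sum_fiberwise_of_maps_to (t := Finset.range (N + 1)) (g := Finset.card)
      (fun S _ => Finset.mem_range.2 (Nat.lt_succ_of_le (Finset.card_le_univ S)))]
    calc _ ≤ ∑ k ∈ Finset.range (N + 1), a * (ρ₀ ^ k * (1 - ρ₀) ^ (N - k) * N.choose k) := by
          refine Finset.sum_le_sum fun k hk => ?_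
          have hkN : k ≤ N := Nat.lt_succ_iff.1 (Finset.mem_range.1 hk)
          have hw : 0 ≤ ρ₀ ^ k * (1 - ρ₀) ^ (N - k) := by positivity
          rcases lt_or_ge k m₀ with h | h
          · rw [Finset.sum_eq_zero]
            · exact mul_nonneg ha0 (mul_nonneg hw (Nat.cast_nonneg _))
            · intro S hS
              simp only [Finset.mem_filter] at hS
              omega
          · have h1 := slice_ratio_anti 𝒜 hdc m₀ k h hkN
            rw [← hN, ← ha, div_le_iff₀ (by exact_mod_cast Nat.choose_pos hkN)] at h1
            calc _ ≤ ∑ S ∈ 𝒜.filter (fun S => S.card = k), ρ₀ ^ k * (1 - ρ₀) ^ (N - k) := by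
                  rw [Finset.sum_congr rfl (g := fun _ => ρ₀ ^ k * (1 - ρ₀) ^ (N - k))]
                  · refine Finset.sum_le_sum_of_subset_of_nonneg ?_ fun _ _ _ => hw
                    intro S hS
                    simp only [Finset.mem_filter] at hS ⊢
                    exact ⟨hS.1.1, hS.2⟩
                  · intro S hS
                    rw [(Finset.mem_filter.1 hS).2]
              _ ≤ _ := by
                  rw [Finset.sum_const, nsmul_eq_mul]
                  nlinarith [mul_le_mul_of_nonneg_right h1 hw]
      _ = a := by
          rw [← Finset.mul_sum, ← add_pow]; simp
  linarith
end

section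
/- Let k ≥ 1 and let i₁, i₂, …, i_k be a closed walk on a vertex set V, that is, a sequence of vertices whose k steps are the unordered pairs {i₁, i₂}, {i₂, i₃}, …, {i_{k−1}, i_k}, {i_k, i₁} (loops, where a step has both endpoints equal, are allowed). Let p be the number of distinct vertices among i₁, …, i_k. If p > k/2 + 1, then some unordered edge occurs exactly once among the k steps of the walk. -/
theorem aux_prefix {V : Type*} [DecidableEq V] (f : ℕ → V) (n : ℕ) :
    ((Finset.range (n + 1)).image f).card ≤
      ((Finset.range n).image (fun m => s(f m, f (m + 1)))).card + 1 := by
  induction n with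
  | zero => simp
  | succ n ih =>
    rw [Finset.range_add_one (n := n + 1), Finset.image_insert]
    by_cases h : f (n + 1) ∈ (Finset.range (n + 1)).image f
    · rw [Finset.insert_eq_of_mem h]
      refine ih.trans (Nat.add_le_add_right (Finset.card_le_card ?_) 1)
      exact Finset.image_subset_image (Finset.range_subset_range.2 (Nat.le_succ n))
    · have hc : ((Finset.range (n + 1)).image (fun m => s(f m, f (m + 1)))).card =
          ((Finset.range n).image (fun m => s(f m, f (m + 1)))).card + 1 := by
        rw [Finset.range_add_one, Finset.image_insert, Finset.card_insert_of_notMem]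
        intro hm
        obtain ⟨m, hm, he⟩ := Finset.mem_image.1 hm
        have hm' := Finset.mem_range.1 hm
        have hin : f (n + 1) ∈ s(f m, f (m + 1)) := by
          rw [show s(f m, f (m + 1)) = s(f n, f (n + 1)) from he]
          exact Sym2.mem_mk_right _ _
        apply h
        rcases Sym2.mem_iff.1 hin with h1 | h1
        · rw [h1]
          exact Finset.mem_image_of_mem f (Finset.mem_range.2 (by omega))
        · rw [h1]
          exact Finset.mem_image_of_mem f (Finset.mem_range.2 (by omega))
      rw [Finset.card_insert_of_notMem h, hc]
      omega

/-- Let `i₁, …, i_k` (`k ≥ 1`) be a closed walk on a vertex set `V`, with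
steps the unordered pairs `{i_t, i_{t+1}}` (indices cyclic, loops allowed).  If the number
`p` of distinct vertices of the walk satisfies `p > k/2 + 1`, then some unordered edge
occurs exactly once among the `k` steps of the walk. -/
theorem closed_walk_edge_multiplicity_one {V : Type*} [DecidableEq V]
    (k : ℕ) [NeZero k] (i : Fin k → V)
    (hp : ((Finset.univ.image i).card : ℝ) > (k : ℝ) / 2 + 1) :
    ∃ t : Fin k,
      (Finset.univ.filter (fun u : Fin k => s(i u, i (u + 1)) = s(i t, i (t + 1)))).card = 1 := by
  by_contra hcon
  push Not at hcon
  set e : Fin k → Sym2 V := fun u => s(i u, i (u + 1)) with he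
  have h2 : 2 * (Finset.univ.image e).card ≤ k := by
    have h := Finset.card_eq_sum_card_image e Finset.univ
    rw [Finset.card_univ, Fintype.card_fin] at h
    have h3 := Finset.card_nsmul_le_sum (Finset.univ.image e)
      (fun b => (Finset.univ.filter (fun u => e u = b)).card) 2 (by
        intro b hb
        obtain ⟨t, -, rfl⟩ := Finset.mem_image.1 hb
        have h4 := hcon t
        have h5 : 0 < (Finset.univ.filter (fun u => e u = e t)).card :=
          Finset.card_pos.2 ⟨t, by simp⟩
        change (Finset.univ.filter (fun u => e u = e t)).card ≠ 1 at h4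
        change 2 ≤ (Finset.univ.filter (fun u => e u = e t)).card
        omega)
    rw [smul_eq_mul] at h3
    omega
  have h1 := aux_prefix (fun n => i (Fin.ofNat k n)) k
  have hs : ∀ n : ℕ, Fin.ofNat k (n + 1) = Fin.ofNat k n + 1 := by
    intro n
    apply Fin.ext
    simp [Fin.val_add, Nat.add_mod]
  have hV : (Finset.univ.image i).card ≤
      ((Finset.range (k + 1)).image (fun n => i (Fin.ofNat k n))).card := by
    apply Finset.card_le_card
    intro v hv
    obtain ⟨t, -, rfl⟩ := Finset.mem_image.1 hv
    exact Finset.mem_image.2 ⟨t.val, Finset.mem_range.2 (by omega), by simp⟩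
  have hE : ((Finset.range k).image
      (fun m => s(i (Fin.ofNat k m), i (Fin.ofNat k (m + 1))))).card ≤
      (Finset.univ.image e).card := by
    apply Finset.card_le_card
    intro v hv
    obtain ⟨t, -, rfl⟩ := Finset.mem_image.1 hv
    exact Finset.mem_image.2 ⟨Fin.ofNat k t, Finset.mem_univ _, by simp only [he, hs]⟩
  have h6 : 2 * (Finset.univ.image i).card ≤ k + 2 := by
    have := hV.trans (h1.trans (Nat.add_le_add_right hE 1))
    omega
  have h7 : (2 : ℝ) * ((Finset.univ.image i).card : ℝ) ≤ (k : ℝ) + 2 := by exact_mod_cast h6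
  linarith
end

section
/- Let H be a real or complex Hilbert space and let P and Q be orthogonal projections on H. If the operator norm of the composition Q ∘ P satisfies ‖Q ∘ P‖ ≤ 1/4, then for every h ∈ H, ‖Q h‖ ≤ (1/3) ‖h − Q h‖ + (4/3) ‖h − P h‖. -/
/-- Let `P` and `Q` be orthogonal projections on a real or complex Hilbert
space `H` with `‖Q ∘ P‖ ≤ 1/4`.  Then for every `h ∈ H`,
`‖Q h‖ ≤ (1/3) ‖h − Q h‖ + (4/3) ‖h − P h‖`. -/
theorem proj_norm_bound {𝕜 : Type*} [RCLike 𝕜] {H : Type*} [NormedAddCommGroup H]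
    [InnerProductSpace 𝕜 H] [CompleteSpace H]
    (P Q : H →L[𝕜] H)
    (hPidem : P.comp P = P) (hPsa : IsSelfAdjoint P)
    (hQidem : Q.comp Q = Q) (hQsa : IsSelfAdjoint Q)
    (hQP : ‖Q.comp P‖ ≤ 1 / 4) :
    ∀ h : H, ‖Q h‖ ≤ (1 / 3) * ‖h - Q h‖ + (4 / 3) * ‖h - P h‖ := by
  intro h
  have hQ : ∀ x : H, ‖Q x‖ ≤ ‖x‖ := by
    intro x
    have hsym := hQsa.isSymmetric
    have h1 : inner 𝕜 (Q x) (Q x) = inner 𝕜 (Q x) x := by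
      have h2 : inner 𝕜 (Q (Q x)) x = inner 𝕜 (Q x) (Q x) := hsym (Q x) x
      have h3 : Q (Q x) = Q x := congrArg (fun T : H →L[𝕜] H => T x) hQidem
      rw [h3] at h2
      exact h2.symm
    have h4 : ‖Q x‖ * ‖Q x‖ ≤ ‖Q x‖ * ‖x‖ := by
      have h5 := norm_inner_le_norm (𝕜 := 𝕜) (Q x) x
      rw [← h1, inner_self_eq_norm_sq_to_K, norm_pow, RCLike.norm_ofReal, sq_abs] at h5
      nlinarith
    by_contra! hlt
    nlinarith [norm_nonneg x]
  have e1 : ‖Q (P h)‖ ≤ 1 / 4 * ‖h‖ := (Q.comp P).le_of_opNorm_le hQP h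
  have e2 : ‖h‖ ≤ ‖Q h‖ + ‖h - Q h‖ := by
    simpa using norm_add_le (Q h) (h - Q h)
  have e3 : ‖Q h‖ ≤ ‖Q (P h)‖ + ‖Q (h - P h)‖ := by
    have := norm_add_le (Q (P h)) (Q (h - P h))
    rwa [← map_add, add_sub_cancel] at this
  have e4 := hQ (h - P h)
  linarith
end

section
/- Let B be a real random variable with E[B] = 0 and E[B^p] ≤ (2Kp)^p for every integer p ≥ 2, where K > 0. Then for every t with 0 ≤ t ≤ 1/(4eK), E[exp(tB)] ≤ exp(4 e² t² K²). -/
open MeasureTheory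

lemma aux_fact (n : ℕ) (hn : 1 ≤ n) : 2 * (n : ℝ) ^ n ≤ Real.exp 1 ^ n * n.factorial := by
  have h := Stirling.le_factorial_stirling n
  have hs : 2 ≤ √(2 * Real.pi * n) := by
    apply Real.le_sqrt_of_sq_le
    have : (1:ℝ) ≤ n := by exact_mod_cast hn
    nlinarith [Real.pi_gt_three]
  have he : 0 < Real.exp 1 ^ n := by positivity
  have h2 : 2 * ((n : ℝ) / Real.exp 1) ^ n ≤ n.factorial :=
    le_trans (mul_le_mul_of_nonneg_right hs (by positivity)) h
  rw [div_pow, ← mul_div_assoc, div_le_iff₀ he] at h2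
  linarith

lemma aux_odd (y : ℝ) (m : ℕ) : |y| ^ (2*m+1) / (2*m+1).factorial ≤
    y ^ (2*m) / (2*m).factorial + y ^ (2*m+2) / (2*m+2).factorial := by
  have e1 : y ^ (2*m) = |y| ^ (2*m) := by rw [pow_mul, pow_mul, sq_abs]
  have e2 : y ^ (2*m+2) = |y| ^ (2*m) * |y| ^ 2 := by rw [pow_add, e1, sq_abs]
  rw [e1, e2, pow_succ, Nat.factorial_succ (2*m+1), Nat.factorial_succ (2*m)]
  have ha := abs_nonneg y
  set a := |y|
  have hf : (0:ℝ) < (2*m).factorial := by positivity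
  have key : a / (2*m+1) ≤ 1 + a^2 / ((2*m+2)*(2*m+1)) := by
    have hm : (0:ℝ) ≤ m := by positivity
    rw [← sub_nonneg]
    have : 1 + a^2 / ((2*m+2)*(2*m+1)) - a / (2*m+1)
      = ((2*m+2)*(2*m+1) + a^2 - a*(2*m+2)) / (((2:ℝ)*m+2)*(2*m+1)) := by
      field_simp
    rw [this]
    apply div_nonneg _ (by positivity)
    nlinarith [sq_nonneg (a - (m+1)), mul_nonneg hm hm]
  have := mul_le_mul_of_nonneg_left key (show 0 ≤ a^(2*m) / (2*m).factorial by positivity)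
  push_cast
  refine le_trans (le_of_eq ?_) (this.trans (le_of_eq ?_))
  · rw [div_mul_div_comm, mul_comm (2 * (m:ℝ) + 1)]
  · rw [mul_add, mul_one, div_mul_div_comm]
    congr 2
    ring

theorem mgf_bound_of_moments {Ω : Type*} [MeasurableSpace Ω]
    (μ : Measure Ω) [IsProbabilityMeasure μ]
    (B : Ω → ℝ) (hmeas : Measurable B)
    (hint : ∀ p : ℕ, Integrable (fun ω => B ω ^ p) μ)
    (K : ℝ) (hK : 0 < K)
    (hmean : ∫ ω, B ω ∂μ = 0)
    (hmom : ∀ p : ℕ, 2 ≤ p → ∫ ω, B ω ^ p ∂μ ≤ (2 * K * (p : ℝ)) ^ p)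
    (t : ℝ) (ht0 : 0 ≤ t) (ht1 : t ≤ 1 / (4 * Real.exp 1 * K)) :
    ∫ ω, Real.exp (t * B ω) ∂μ ≤ Real.exp (4 * Real.exp 1 ^ 2 * t ^ 2 * K ^ 2) := by
  set x : ℝ := 2 * Real.exp 1 * K * t with hx
  have hx0 : 0 ≤ x := by positivity
  have hx1 : x ≤ 1/2 := by
    rw [le_div_iff₀ (by positivity)] at ht1
    rw [hx]; linarith
  have hI : ∀ p : ℕ, Integrable (fun ω => (t * B ω) ^ p / p.factorial) μ := by
    intro p
    simp_rw [mul_pow]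
    exact ((hint p).const_mul _).div_const _
  have hb : ∀ p : ℕ, 2 ≤ p → ∫ ω, (t * B ω) ^ p / p.factorial ∂μ ≤ x ^ p / 2 := by
    intro p hp
    simp_rw [mul_pow]
    rw [integral_div, integral_const_mul, div_le_iff₀ (by positivity)]
    have h1 := mul_le_mul_of_nonneg_left (hmom p hp) (pow_nonneg ht0 p)
    have h2 := mul_le_mul_of_nonneg_left (aux_fact p (by omega))
      (show 0 ≤ (2 * K * t) ^ p / 2 by positivity)
    refine h1.trans (le_trans (le_of_eq ?_) (h2.trans (le_of_eq ?_)))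
    · rw [mul_pow (2*K), mul_pow (2*K) t]; ring
    · rw [hx, show 2 * Real.exp 1 * K * t = (2*K*t) * Real.exp 1 by ring, mul_pow _ (Real.exp 1)]
      ring
  have h0 : ∫ ω, (t * B ω) ^ 0 / (Nat.factorial 0 : ℝ) ∂μ = 1 := by simp
  have h1 : ∫ ω, (t * B ω) ^ 1 / (Nat.factorial 1 : ℝ) ∂μ = 0 := by
    simp [integral_const_mul, hmean]
  have heven : ∀ m : ℕ, ∫ ω, (t * B ω) ^ (2*m) / (2*m).factorial ∂μ ≤ (1/2) ^ (2*m) := by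
    intro m
    rcases Nat.eq_zero_or_pos m with rfl | hm
    · simp
    · have := pow_le_pow_left₀ hx0 hx1 (2*m)
      have := pow_nonneg hx0 (2*m)
      linarith [hb (2*m) (by omega)]
  have hnorm : ∀ p : ℕ, ∫ ω, ‖(t * B ω) ^ p / p.factorial‖ ∂μ ≤ 4 * (1/2) ^ p := by
    intro p
    have hn : ∀ ω, ‖(t * B ω) ^ p / p.factorial‖ = |t * B ω| ^ p / p.factorial := by
      intro ω
      rw [norm_div, norm_pow, Real.norm_eq_abs, Real.norm_natCast]
    rcases Nat.even_or_odd' p with ⟨m, rfl | rfl⟩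
    · simp_rw [hn, pow_mul, sq_abs, ← pow_mul]
      have := heven m
      have : (0:ℝ) ≤ (1/2)^(2*m) := by positivity
      linarith
    · simp_rw [hn]
      calc _ ≤ ∫ ω, ((t * B ω) ^ (2*m) / (2*m).factorial
              + (t * B ω) ^ (2*m+2) / (2*m+2).factorial) ∂μ := by
            apply integral_mono
            · have := (hI (2*m+1)).norm
              simp_rw [hn] at this
              exact this
            · exact (hI _).add (hI _)
            · intro ω; exact aux_odd _ m
        _ ≤ (1/2) ^ (2*m) + (1/2) ^ (2*(m+1)) := by
            rw [integral_add (hI _) (hI _)]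
            exact add_le_add (heven m) (heven (m+1))
        _ ≤ _ := by
            have : (0:ℝ) ≤ (1/2)^(2*m) := by positivity
            have e1 : ((1:ℝ)/2)^(2*(m+1)) = (1/2)^(2*m) * (1/4) := by
              rw [mul_add, pow_add]; norm_num
            have e2 : ((1:ℝ)/2)^(2*m+1) = (1/2)^(2*m) * (1/2) := pow_succ _ _
            rw [e1, e2]
            linarith
  have hsum : Summable (fun p : ℕ => ∫ ω, ‖(t * B ω) ^ p / p.factorial‖ ∂μ) :=
    Summable.of_nonneg_of_le (fun p => integral_nonneg fun ω => norm_nonneg _) hnorm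
      ((summable_geometric_of_lt_one (by norm_num) (by norm_num)).mul_left 4)
  have hS := hasSum_integral_of_summable_integral_norm hI hsum
  have he : ∀ ω, ∑' p : ℕ, (t * B ω) ^ p / p.factorial = Real.exp (t * B ω) := by
    intro ω
    rw [Real.exp_eq_exp_ℝ, NormedSpace.exp_eq_tsum_div]
  simp_rw [he] at hS
  have hS2 := (hasSum_nat_add_iff' 2).2 hS
  have hg := ((hasSum_geometric_of_lt_one hx0 (by linarith)).mul_left (x^2/2))
  have hle := hasSum_le (fun p => by
    refine (hb (p+2) (by omega)).trans (le_of_eq ?_)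
    show _ = x^2/2 * x^p
    ring) hS2 hg
  rw [Finset.sum_range_succ, Finset.sum_range_one, h0, h1] at hle
  have hinv : (1 - x)⁻¹ ≤ 2 := by
    rw [inv_le_comm₀ (by linarith) (by norm_num)]; linarith
  have := mul_le_mul_of_nonneg_left hinv (show 0 ≤ x^2/2 by positivity)
  have h3 := Real.add_one_le_exp (x^2)
  rw [show 4 * Real.exp 1 ^ 2 * t ^ 2 * K ^ 2 = x^2 by rw [hx]; ring]
  linarith
end
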